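/- Let A be a semigroup in a braided monoidal category C whose multiplication m is non-degenerate with respect to some class of objects containing A, and let t₁, t₂, t₃, t₄ : A⊗A → A⊗A. Then the following are equivalent: (i) relations (c12), (c13) and (c14) hold; (ii) relations (c12), (c23) and (c24) hold; (iii) relations (c13), (c23) and (c34) hold; (iv) relations (c14), (c24) and (c34) hold. -/

import Mathlib

open CategoryTheory Category MonoidalCategory

universe v u

namespace WeakMultiplierBimonoid

variable {C : Type u} [Category.{v} C] [MonoidalCategory C] [BraidedCategory C]

/-- For `f : A ⊗ A ⟶ A ⊗ A`, the morphism `f ⊗ 1 : A ⊗ (A ⊗ A) ⟶ A ⊗ (A ⊗ A)`. -/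
def wl {A : C} (f : A ⊗ A ⟶ A ⊗ A) : A ⊗ (A ⊗ A) ⟶ A ⊗ (A ⊗ A) :=
  (α_ A A A).inv ≫ (f ▷ A) ≫ (α_ A A A).hom

/-- For `f : A ⊗ A ⟶ A`, the morphism `f ⊗ 1 : A ⊗ (A ⊗ A) ⟶ A ⊗ A`. -/
def ml {A : C} (f : A ⊗ A ⟶ A) : A ⊗ (A ⊗ A) ⟶ A ⊗ A :=
  (α_ A A A).inv ≫ (f ▷ A)

/-- A morphism `v : Z ⊗ V ⟶ W` is non-degenerate on the left with respect to a class
`𝒴` of objects if for every `X` and every `Y ∈ 𝒴` the map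
`Hom(X, V ⊗ Y) → Hom(Z ⊗ X, W ⊗ Y)`, `g ↦ (v ⊗ 1) ∘ (1 ⊗ g)`, is injective. -/
def NdLeftOn {Z V W : C} (v : Z ⊗ V ⟶ W) (𝒴 : Set C) : Prop :=
  ∀ (X : C), ∀ Y ∈ 𝒴, Function.Injective
    (fun g : X ⟶ V ⊗ Y => (Z ◁ g) ≫ (α_ Z V Y).inv ≫ (v ▷ Y))

/-- Non-degenerate on the right with respect to `𝒴`: `v ∘ c` is non-degenerate on the
left with respect to `𝒴`. -/
def NdRightOn {Z V W : C} (v : Z ⊗ V ⟶ W) (𝒴 : Set C) : Prop :=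
  NdLeftOn ((β_ V Z).hom ≫ v) 𝒴

/-- Relation (c12): `(m ⊗ 1) ∘ (1 ⊗ t₁) = (1 ⊗ m) ∘ (t₂ ⊗ 1)`. -/
def C12 {A : C} (m : A ⊗ A ⟶ A) (t₁ t₂ : A ⊗ A ⟶ A ⊗ A) : Prop :=
  (A ◁ t₁) ≫ ml m = wl t₂ ≫ (A ◁ m)

/-- Relation (c13): `(1 ⊗ m) ∘ (1 ⊗ c) ∘ (t₁ ⊗ 1) = (1 ⊗ m) ∘ (t₃ ⊗ 1) ∘ (1 ⊗ c)`. -/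
def C13 {A : C} (m : A ⊗ A ⟶ A) (t₁ t₃ : A ⊗ A ⟶ A ⊗ A) : Prop :=
  wl t₁ ≫ (A ◁ (β_ A A).hom) ≫ (A ◁ m)
    = (A ◁ (β_ A A).hom) ≫ wl t₃ ≫ (A ◁ m)

/-- Relation (c14): `(m ⊗ 1) ∘ (c ⊗ 1) ∘ (1 ⊗ t₁) = (1 ⊗ m) ∘ (t₄ ⊗ 1)`. -/
def C14 {A : C} (m : A ⊗ A ⟶ A) (t₁ t₄ : A ⊗ A ⟶ A ⊗ A) : Prop :=
  (A ◁ t₁) ≫ wl (β_ A A).hom ≫ ml m = wl t₄ ≫ (A ◁ m)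

/-- Relation (c23): `(1 ⊗ m) ∘ (1 ⊗ c) ∘ (t₂ ⊗ 1) = (m ⊗ 1) ∘ (1 ⊗ t₃)`. -/
def C23 {A : C} (m : A ⊗ A ⟶ A) (t₂ t₃ : A ⊗ A ⟶ A ⊗ A) : Prop :=
  wl t₂ ≫ (A ◁ (β_ A A).hom) ≫ (A ◁ m) = (A ◁ t₃) ≫ ml m

/-- Relation (c24): `(m ⊗ 1) ∘ (c ⊗ 1) ∘ (1 ⊗ t₂) = (m ⊗ 1) ∘ (1 ⊗ t₄) ∘ (c ⊗ 1)`. -/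
def C24 {A : C} (m : A ⊗ A ⟶ A) (t₂ t₄ : A ⊗ A ⟶ A ⊗ A) : Prop :=
  (A ◁ t₂) ≫ wl (β_ A A).hom ≫ ml m = wl (β_ A A).hom ≫ (A ◁ t₄) ≫ ml m

/-- Relation (c34): `(m ⊗ 1) ∘ (c ⊗ 1) ∘ (1 ⊗ t₃) = (1 ⊗ m) ∘ (1 ⊗ c) ∘ (t₄ ⊗ 1)`. -/
def C34 {A : C} (m : A ⊗ A ⟶ A) (t₃ t₄ : A ⊗ A ⟶ A ⊗ A) : Prop :=
  (A ◁ t₃) ≫ wl (β_ A A).hom ≫ ml m = wl t₄ ≫ (A ◁ (β_ A A).hom) ≫ (A ◁ m)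

/-!
For three of the indices, consider the relations among the corresponding `tᵢ` and act on the legs
of each relation by a further factor of `A`. Actions on different legs commute and, by
associativity, so do the actions by `m` and by its braided opposite on the same leg, up to the
braiding. Hence the three relations become equalities between the same three morphisms on four
strands, and as non-degeneracy cancels the further factor, any two of them imply the third.
Consecutive conditions of the theorem share a relation, and their other relations are exchanged
within the two triples of indices containing those of the shared one.
-/

section Monoidal

omit [BraidedCategory C]

variable {P V W X Y Z X' : C}

/-- The action of `p : P ⊗ V ⟶ W` on the left leg of `f : X ⟶ V ⊗ Y`: in elements,
`a ⊗ x ↦ a · f(x)` with `a` multiplied onto the first tensor factor of `f(x)`. -/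
def actLeft (p : P ⊗ V ⟶ W) (f : X ⟶ V ⊗ Y) : P ⊗ X ⟶ W ⊗ Y :=
  P ◁ f ≫ (α_ P V Y).inv ≫ p ▷ Y

/-- The action of `q : Y ⊗ Z ⟶ W` on the right leg of `f : X ⟶ V ⊗ Y`: in elements,
`x ⊗ b ↦ f(x) · b` with `b` multiplied onto the second tensor factor of `f(x)`. -/
def actRight (q : Y ⊗ Z ⟶ W) (f : X ⟶ V ⊗ Y) : X ⊗ Z ⟶ V ⊗ W :=
  f ▷ Z ≫ (α_ V Y Z).hom ≫ V ◁ q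

theorem actLeft_comp (p : P ⊗ V ⟶ W) (g : X' ⟶ X) (f : X ⟶ V ⊗ Y) :
    actLeft p (g ≫ f) = P ◁ g ≫ actLeft p f := by
  simp [actLeft]

theorem actRight_comp (q : Y ⊗ Z ⟶ W) (g : X' ⟶ X) (f : X ⟶ V ⊗ Y) :
    actRight q (g ≫ f) = g ▷ Z ≫ actRight q f := by
  simp [actRight]

theorem actRight_actLeft {Y' : C} (p : P ⊗ V ⟶ W) (q : Y ⊗ Z ⟶ Y') (f : X ⟶ V ⊗ Y) :
    actRight q (actLeft p f) = (α_ P X Z).hom ≫ actLeft p (actRight q f) := by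
  simp only [actLeft, actRight, comp_whiskerRight, MonoidalCategory.whiskerLeft_comp, assoc]
  rw [associator_naturality_left_assoc, ← whisker_exchange]
  monoidal

theorem actLeft_actRight {Y' : C} (p : P ⊗ V ⟶ W) (q : Y ⊗ Z ⟶ Y') (f : X ⟶ V ⊗ Y) :
    actLeft p (actRight q f) = (α_ P X Z).inv ≫ actRight q (actLeft p f) := by
  rw [actRight_actLeft, Iso.inv_hom_id_assoc]

/-- Compatibility of `s` and `t` through the outer strands: in elements,
`a · s(x ⊗ b) = t(a ⊗ x) · b`, where `a` acts by `p` on the left leg and `b` acts by `q` on the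
right leg. It is the common form of (c12), (c14), (c23) and (c34). -/
def OuterCompatible {Y' : C} (p : P ⊗ V ⟶ W) (q : Y ⊗ Z ⟶ Y')
    (s : X ⊗ Z ⟶ V ⊗ Y') (t : P ⊗ X ⟶ W ⊗ Y) : Prop :=
  (α_ P X Z).hom ≫ actLeft p s = actRight q t

end Monoidal

section Swap

/-- The exchange of the last two of three strands, bracketed to the left. -/
def swapRight (X Y Z : C) : (X ⊗ Y) ⊗ Z ≅ (X ⊗ Z) ⊗ Y :=
  α_ X Y Z ≪≫ whiskerLeftIso X (β_ Y Z) ≪≫ (α_ X Z Y).symm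

/-- The exchange of the first two of three strands, bracketed to the right. -/
def swapLeft (X Y Z : C) : X ⊗ (Y ⊗ Z) ≅ Y ⊗ (X ⊗ Z) :=
  (α_ X Y Z).symm ≪≫ whiskerRightIso (β_ X Y) Z ≪≫ α_ Y X Z

theorem swapRight_naturality {X X' : C} (f : X ⟶ X') (Y Z : C) :
    f ▷ Y ▷ Z ≫ (swapRight X' Y Z).hom = (swapRight X Y Z).hom ≫ f ▷ Z ▷ Y := by
  simp only [swapRight, Iso.trans_hom, whiskerLeftIso_hom, Iso.symm_hom, assoc]
  rw [associator_naturality_left_assoc, ← whisker_exchange_assoc, associator_inv_naturality_left]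

theorem swapLeft_naturality (X Y : C) {Z Z' : C} (f : Z ⟶ Z') :
    X ◁ Y ◁ f ≫ (swapLeft X Y Z').hom = (swapLeft X Y Z).hom ≫ Y ◁ X ◁ f := by
  simp only [swapLeft, Iso.trans_hom, whiskerRightIso_hom, Iso.symm_hom, assoc]
  rw [associator_inv_naturality_right_assoc, whisker_exchange_assoc, associator_naturality_right]

theorem swapRight_tensor (W X Y Z : C) :
    (swapRight (W ⊗ X) Y Z).hom ≫ (α_ W X Z).hom ▷ Y ≫ (α_ W (X ⊗ Z) Y).hom =
      (α_ W X Y).hom ▷ Z ≫ (α_ W (X ⊗ Y) Z).hom ≫ W ◁ (swapRight X Y Z).hom := by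
  simp only [swapRight, Iso.trans_hom, whiskerLeftIso_hom, Iso.symm_hom]
  monoidal

theorem swapLeft_tensor (X Y Z W : C) :
    (swapLeft X Y (Z ⊗ W)).hom ≫ Y ◁ (α_ X Z W).inv ≫ (α_ Y (X ⊗ Z) W).inv =
      X ◁ (α_ Y Z W).inv ≫ (α_ X (Y ⊗ Z) W).inv ≫ (swapLeft X Y Z).hom ▷ W := by
  simp only [swapLeft, Iso.trans_hom, whiskerRightIso_hom, Iso.symm_hom]
  monoidal

end Swap

section RightActions

variable {P V W X Y Z Z' : C} {p : P ⊗ V ⟶ W} {q : Y ⊗ Z ⟶ Y} {r : Y ⊗ Z' ⟶ Y}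

/-- Compatibility of `s` and `t` through two right actions `q` and `r`: in elements,
`s(x ⊗ b) · c = t(x ⊗ c) · b` up to the braiding, where `b` acts by `q` and `c` by `r`.
It is the form of (c13). -/
def RightCompatible (q : Y ⊗ Z ⟶ Y) (r : Y ⊗ Z' ⟶ Y)
    (s : X ⊗ Z ⟶ V ⊗ Y) (t : X ⊗ Z' ⟶ V ⊗ Y) : Prop :=
  actRight r s = (swapRight X Z Z').hom ≫ actRight q t

theorem actRight_actRight (hqr : q ▷ Z' ≫ r = (swapRight Y Z Z').hom ≫ r ▷ Z ≫ q)
    (f : X ⟶ V ⊗ Y) :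
    actRight r (actRight q f) = (swapRight X Z Z').hom ≫ actRight q (actRight r f) := by
  calc actRight r (actRight q f)
    _ = f ▷ Z ▷ Z' ≫ (α_ V Y Z).hom ▷ Z' ≫ (α_ V (Y ⊗ Z) Z').hom ≫ V ◁ (q ▷ Z' ≫ r) := by
      simp [actRight]
    _ = f ▷ Z ▷ Z' ≫ (swapRight (V ⊗ Y) Z Z').hom ≫
        (α_ V Y Z').hom ▷ Z ≫ (α_ V (Y ⊗ Z') Z).hom ≫ V ◁ (r ▷ Z ≫ q) := by
      rw [hqr, MonoidalCategory.whiskerLeft_comp]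
      simp only [← reassoc_of% swapRight_tensor V Y Z Z']
    _ = (swapRight X Z Z').hom ≫ actRight q (actRight r f) := by
      rw [reassoc_of% swapRight_naturality f Z Z']
      simp [actRight]

theorem actRight_eq_swapRight_comp_actRight_iff (s : X ⊗ Z ⟶ V ⊗ Y) (t : X ⊗ Z' ⟶ V ⊗ Y) :
    actRight r ((α_ P X Z).hom ≫ actLeft p s) =
        (swapRight (P ⊗ X) Z Z').hom ≫ actRight q ((α_ P X Z').hom ≫ actLeft p t) ↔
      actLeft p (actRight r s) = actLeft p ((swapRight X Z Z').hom ≫ actRight q t) := by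
  simp only [actRight_comp, actRight_actLeft, actLeft_comp,
    reassoc_of% swapRight_tensor P X Z Z', cancel_epi]

variable {t₁ : X ⊗ Z ⟶ V ⊗ Y} {t₂ : P ⊗ X ⟶ W ⊗ Y} {t₃ : X ⊗ Z' ⟶ V ⊗ Y}

theorem OuterCompatible.rightCompatible_iff_of_fst
    (hqr : q ▷ Z' ≫ r = (swapRight Y Z Z').hom ≫ r ▷ Z ≫ q)
    (hp : (actLeft p : ((X ⊗ Z) ⊗ Z' ⟶ V ⊗ Y) → _).Injective)
    (hq : (actRight q : ((P ⊗ X) ⊗ Z' ⟶ W ⊗ Y) → _).Injective)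
    (h : OuterCompatible p q t₁ t₂) :
    RightCompatible q r t₁ t₃ ↔ OuterCompatible p r t₃ t₂ := by
  rw [RightCompatible, ← hp.eq_iff, ← actRight_eq_swapRight_comp_actRight_iff, h,
    actRight_actRight hqr, cancel_epi, hq.eq_iff, eq_comm, OuterCompatible]

theorem OuterCompatible.rightCompatible_iff_of_snd
    (hqr : q ▷ Z' ≫ r = (swapRight Y Z Z').hom ≫ r ▷ Z ≫ q)
    (hp : (actLeft p : ((X ⊗ Z) ⊗ Z' ⟶ V ⊗ Y) → _).Injective)
    (hr : (actRight r : ((P ⊗ X) ⊗ Z ⟶ W ⊗ Y) → _).Injective)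
    (h : OuterCompatible p r t₃ t₂) :
    RightCompatible q r t₁ t₃ ↔ OuterCompatible p q t₁ t₂ := by
  rw [RightCompatible, ← hp.eq_iff, ← actRight_eq_swapRight_comp_actRight_iff, h,
    ← actRight_actRight hqr, hr.eq_iff, OuterCompatible]

end RightActions

section LeftActions

variable {P P' V X Y Y' Z : C} {p : P ⊗ V ⟶ V} {r : P' ⊗ V ⟶ V} {q : Y ⊗ Z ⟶ Y'}

/-- Compatibility of `s` and `t` through two left actions `p` and `r`: in elements,
`a · s(b ⊗ x) = b · t(a ⊗ x)` up to the braiding, where `a` acts by `r` and `b` by `p`.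
It is the form of (c24). -/
def LeftCompatible (p : P ⊗ V ⟶ V) (r : P' ⊗ V ⟶ V)
    (s : P ⊗ X ⟶ V ⊗ Y) (t : P' ⊗ X ⟶ V ⊗ Y) : Prop :=
  actLeft r s = (swapLeft P' P X).hom ≫ actLeft p t

theorem actLeft_actLeft (hpr : P' ◁ p ≫ r = (swapLeft P' P V).hom ≫ P ◁ r ≫ p)
    (f : X ⟶ V ⊗ Y) :
    actLeft r (actLeft p f) = (swapLeft P' P X).hom ≫ actLeft p (actLeft r f) := by
  calc actLeft r (actLeft p f)
    _ = P' ◁ P ◁ f ≫ P' ◁ (α_ P V Y).inv ≫ (α_ P' (P ⊗ V) Y).inv ≫ (P' ◁ p ≫ r) ▷ Y := by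
      simp [actLeft]
    _ = P' ◁ P ◁ f ≫ (swapLeft P' P (V ⊗ Y)).hom ≫
        P ◁ (α_ P' V Y).inv ≫ (α_ P (P' ⊗ V) Y).inv ≫ (P ◁ r ≫ p) ▷ Y := by
      rw [hpr, comp_whiskerRight, reassoc_of% swapLeft_tensor P' P V Y]
    _ = (swapLeft P' P X).hom ≫ actLeft p (actLeft r f) := by
      rw [reassoc_of% swapLeft_naturality P' P f]
      simp [actLeft]

theorem actLeft_eq_swapLeft_comp_actLeft_iff (s : P ⊗ X ⟶ V ⊗ Y) (t : P' ⊗ X ⟶ V ⊗ Y) :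
    actLeft r ((α_ P X Z).inv ≫ actRight q s) =
        (swapLeft P' P (X ⊗ Z)).hom ≫ actLeft p ((α_ P' X Z).inv ≫ actRight q t) ↔
      actRight q (actLeft r s) = actRight q ((swapLeft P' P X).hom ≫ actLeft p t) := by
  simp only [actLeft_comp, actLeft_actRight, actRight_comp,
    reassoc_of% swapLeft_tensor P' P X Z, cancel_epi]

variable {t₁ : X ⊗ Z ⟶ V ⊗ Y'} {t₂ : P ⊗ X ⟶ V ⊗ Y} {t₄ : P' ⊗ X ⟶ V ⊗ Y}

theorem OuterCompatible.leftCompatible_iff_of_fst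
    (hpr : P' ◁ p ≫ r = (swapLeft P' P V).hom ≫ P ◁ r ≫ p)
    (hq : (actRight q : (P' ⊗ (P ⊗ X) ⟶ V ⊗ Y) → _).Injective)
    (hp : (actLeft p : (P' ⊗ (X ⊗ Z) ⟶ V ⊗ Y') → _).Injective)
    (h : OuterCompatible p q t₁ t₂) :
    LeftCompatible p r t₂ t₄ ↔ OuterCompatible r q t₁ t₄ := by
  rw [LeftCompatible, ← hq.eq_iff, ← actLeft_eq_swapLeft_comp_actLeft_iff,
    ← (Iso.eq_inv_comp _).2 h, actLeft_actLeft hpr, cancel_epi, hp.eq_iff,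
    Iso.eq_inv_comp, OuterCompatible]

theorem OuterCompatible.leftCompatible_iff_of_snd
    (hpr : P' ◁ p ≫ r = (swapLeft P' P V).hom ≫ P ◁ r ≫ p)
    (hq : (actRight q : (P' ⊗ (P ⊗ X) ⟶ V ⊗ Y) → _).Injective)
    (hr : (actLeft r : (P ⊗ (X ⊗ Z) ⟶ V ⊗ Y') → _).Injective)
    (h : OuterCompatible r q t₁ t₄) :
    LeftCompatible p r t₂ t₄ ↔ OuterCompatible p q t₁ t₂ := by
  rw [LeftCompatible, ← hq.eq_iff, ← actLeft_eq_swapLeft_comp_actLeft_iff,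
    ← (Iso.eq_inv_comp _).2 h, ← actLeft_actLeft hpr, hr.eq_iff, eq_comm,
    Iso.eq_inv_comp, OuterCompatible]

end LeftActions

section Nondegenerate

variable {V W X Y Z : C}

theorem actLeft_comp_braiding (v : Z ⊗ V ⟶ W) (f : X ⟶ Y ⊗ V) :
    actLeft v (f ≫ (β_ Y V).hom) =
      (β_ X Z).inv ≫ actRight ((β_ V Z).hom ≫ v) f ≫ (β_ Y W).hom := by
  have whiskerLeft_eq : Z ◁ f = (β_ X Z).inv ≫ f ▷ Z ≫ (β_ (Y ⊗ V) Z).hom := by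
    rw [BraidedCategory.braiding_naturality_left, Iso.inv_hom_id_assoc]
  simp [actLeft, actRight, whiskerLeft_eq, BraidedCategory.braiding_tensor_left_hom]

variable {𝒴 : Set C} {v : Z ⊗ V ⟶ W}

omit [BraidedCategory C] in
theorem NdLeftOn.injective_actLeft (h : NdLeftOn v 𝒴) (hY : Y ∈ 𝒴) :
    (actLeft v : (X ⟶ V ⊗ Y) → _).Injective :=
  h X Y hY

theorem NdLeftOn.injective_actRight_braiding (h : NdLeftOn v 𝒴) (hY : Y ∈ 𝒴) :
    (actRight ((β_ V Z).hom ≫ v) : (X ⟶ Y ⊗ V) → _).Injective := by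
  intro f g hfg
  rw [← cancel_mono (β_ Y V).hom]
  apply h.injective_actLeft hY
  rw [actLeft_comp_braiding, actLeft_comp_braiding, hfg]

theorem NdRightOn.injective_actRight (h : NdRightOn v 𝒴) (hY : Y ∈ 𝒴) :
    (actRight v : (X ⟶ Y ⊗ Z) → _).Injective := by
  -- For the reversed braiding, the opposite of `(β_ V Z).hom ≫ v` is `v` itself.
  have opposite_injective :
      (actRight ((β_ V Z).inv ≫ (β_ V Z).hom ≫ v) : (X ⟶ Y ⊗ Z) → _).Injective :=
    @NdLeftOn.injective_actRight_braiding C _ _ (reverseBraiding C) _ _ _ _ _ _ _ h hY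
  simpa only [Iso.inv_hom_id_assoc] using opposite_injective

end Nondegenerate

section Semigroup

variable {A : C}

/-- The opposite multiplication `a ⊗ b ↦ b * a`, formed with the braiding. -/
abbrev opMul (m : A ⊗ A ⟶ A) : A ⊗ A ⟶ A :=
  (β_ A A).hom ≫ m

section Relations

variable (m : A ⊗ A ⟶ A) (s t : A ⊗ A ⟶ A ⊗ A)

omit [BraidedCategory C] in
theorem c12_iff_outerCompatible : C12 m s t ↔ OuterCompatible m m s t := by
  rw [OuterCompatible, ← Iso.eq_inv_comp]
  simp [C12, actLeft, actRight, wl, ml]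

theorem c13_iff_rightCompatible : C13 m s t ↔ RightCompatible m (opMul m) s t := by
  rw [RightCompatible, ← cancel_epi (α_ A A A).inv]
  simp [C13, actRight, wl, swapRight]

theorem c14_iff_outerCompatible : C14 m s t ↔ OuterCompatible (opMul m) m s t := by
  rw [OuterCompatible, ← Iso.eq_inv_comp]
  simp [C14, actLeft, actRight, wl, ml]

theorem c23_iff_outerCompatible : C23 m s t ↔ OuterCompatible m (opMul m) t s := by
  rw [OuterCompatible, eq_comm, ← Iso.inv_comp_eq]
  simp [C23, actLeft, actRight, wl, ml]

theorem c24_iff_leftCompatible : C24 m s t ↔ LeftCompatible m (opMul m) s t := by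
  simp [C24, LeftCompatible, actLeft, wl, ml, swapLeft]

theorem c34_iff_outerCompatible : C34 m s t ↔ OuterCompatible (opMul m) (opMul m) s t := by
  rw [OuterCompatible, ← Iso.eq_inv_comp]
  simp [C34, actLeft, actRight, wl, ml]

end Relations

variable {m : A ⊗ A ⟶ A}

theorem whiskerRight_mul_comp_opMul (hassoc : ml m ≫ m = A ◁ m ≫ m) :
    m ▷ A ≫ opMul m = (swapRight A A A).hom ≫ opMul m ▷ A ≫ m := by
  have hassoc' : m ▷ A ≫ m = (α_ A A A).hom ≫ A ◁ m ≫ m := by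
    rw [← hassoc, ml, assoc, Iso.hom_inv_id_assoc]
  simp [swapRight, hassoc', BraidedCategory.braiding_naturality_left_assoc,
    BraidedCategory.braiding_tensor_left_hom]

theorem whiskerLeft_mul_comp_opMul (hassoc : ml m ≫ m = A ◁ m ≫ m) :
    A ◁ m ≫ opMul m = (swapLeft A A A).hom ≫ A ◁ opMul m ≫ m := by
  simp [swapLeft, ← hassoc, ml, BraidedCategory.braiding_naturality_right_assoc,
    BraidedCategory.braiding_tensor_right_hom]

end Semigroup

/-- Corollary 2.4: the four triples of compatibility relations are
equivalent. -/
theorem corollary_compatibility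
    (A : C) (𝒴 : Set C) (hA : A ∈ 𝒴)
    (m : A ⊗ A ⟶ A)
    (hassoc : ml m ≫ m = (A ◁ m) ≫ m)
    (hndl : NdLeftOn m 𝒴) (hndr : NdRightOn m 𝒴)
    (t₁ t₂ t₃ t₄ : A ⊗ A ⟶ A ⊗ A) :
    [C12 m t₁ t₂ ∧ C13 m t₁ t₃ ∧ C14 m t₁ t₄,
     C12 m t₁ t₂ ∧ C23 m t₂ t₃ ∧ C24 m t₂ t₄,
     C13 m t₁ t₃ ∧ C23 m t₂ t₃ ∧ C34 m t₃ t₄,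
     C14 m t₁ t₄ ∧ C24 m t₂ t₄ ∧ C34 m t₃ t₄].TFAE := by
  have hR := whiskerRight_mul_comp_opMul hassoc
  have hL := whiskerLeft_mul_comp_opMul hassoc
  simp only [c12_iff_outerCompatible, c13_iff_rightCompatible, c14_iff_outerCompatible,
    c23_iff_outerCompatible, c24_iff_leftCompatible, c34_iff_outerCompatible]
  tfae_have 1 ↔ 2 := and_congr_right fun h₁₂ => and_congr
    (h₁₂.rightCompatible_iff_of_fst hR (hndl.injective_actLeft hA) (hndr.injective_actRight hA))
    (h₁₂.leftCompatible_iff_of_fst hL (hndr.injective_actRight hA)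
      (hndl.injective_actLeft hA)).symm
  tfae_have 2 ↔ 3 := by
    rw [and_left_comm, and_left_comm (a := RightCompatible _ _ _ _)]
    exact and_congr_right fun h₂₃ => and_congr
      (h₂₃.rightCompatible_iff_of_snd hR (hndl.injective_actLeft hA)
        (hndl.injective_actRight_braiding hA)).symm
      (h₂₃.leftCompatible_iff_of_fst hL (hndl.injective_actRight_braiding hA)
        (hndl.injective_actLeft hA))
  tfae_have 3 ↔ 4 := by
    simp only [← and_assoc]
    exact and_congr_left fun h₃₄ => and_congr
      (h₃₄.rightCompatible_iff_of_snd hR (hndr.injective_actLeft hA)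
        (hndl.injective_actRight_braiding hA))
      (h₃₄.leftCompatible_iff_of_snd hL (hndl.injective_actRight_braiding hA)
        (hndr.injective_actLeft hA)).symm
  tfae_finish

end WeakMultiplierBimonoid
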